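/- Let u_0 be a vertex of an isoradial graph with mesh δ and suppose the free Green's function satisfies |G_Γ(u; u_0) − (2π)^{-1} log|u − u_0|| ≤ Cδ²/|u − u_0|² for u ≠ u_0. Then for the discretized disc B^δ_Γ(u_0, R) with R/δ sufficiently large, the Green's function G_{B^δ_Γ(u_0,R)}(u; u_0) = G_Γ(u; u_0) − ∑_{a ∈ ∂} ω^δ(u; {a}) G_Γ(a; u_0) satisfies |G_{B^δ_Γ(u_0,R)}(u; u_0)| ≍ δ/R for all vertices u with R − 5δ ≤ |u − u_0| ≤ R − 3δ; consequently, by the identity ω^δ(u_0; {a}; B^δ_Γ(u_0,R)) = −tan θ_{a a_int}·G_{B^δ_Γ(u_0,R)}(a_int; u_0), the exit probability at each boundary vertex satisfies ω^δ(u_0; {a}; B^δ_Γ(u_0, R)) ≍ δ/R. -/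

import Mathlib

/-- An abstract isoradial graph `Γ` of mesh `δ` with rhombi half-angles uniformly in
`[η, π/2 − η]` (condition (♠)). The fields record: the vertex set, the (finite)
neighborhoods, the half-angle of each edge's rhombus, the edge length
`|v − u| = 2δ cos θ`, the discrete harmonicity of linear and quadratic functions
(the defining algebraic identities of isoradiality), and the comparability of the
combinatorial and Euclidean distances inside balls. -/
structure IsoradialGraph (δ η : ℝ) where
  verts : Set ℂ
  nbrs : ℂ → Finset ℂ
  nbrs_symm : ∀ u v, v ∈ nbrs u ↔ u ∈ nbrs v
  nbrs_sub : ∀ u, u ∈ verts → ∀ v ∈ nbrs u, v ∈ verts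
  nbrs_ne : ∀ u, u ∈ verts → ∀ v ∈ nbrs u, v ≠ u
  nbrs_nonempty : ∀ u, u ∈ verts → (nbrs u).Nonempty
  halfAngle : ℂ → ℂ → ℝ
  halfAngle_symm : ∀ u v, halfAngle u v = halfAngle v u
  halfAngle_mem : ∀ u, u ∈ verts → ∀ v ∈ nbrs u,
    halfAngle u v ∈ Set.Icc η (Real.pi / 2 - η)
  edge_len : ∀ u, u ∈ verts → ∀ v ∈ nbrs u,
    dist v u = 2 * δ * Real.cos (halfAngle u v)
  lin_harm : ∀ u, u ∈ verts →
    ∑ v ∈ nbrs u, (Real.tan (halfAngle u v) : ℂ) * (v - u) = 0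
  quad_harm : ∀ u, u ∈ verts →
    ∑ v ∈ nbrs u, (Real.tan (halfAngle u v) : ℂ) * (v ^ 2 - u ^ 2) = 0
  path_in_ball : ∀ (z : ℂ) (ρ : ℝ) (u v : ℂ),
    u ∈ verts ∩ Metric.ball z ρ → v ∈ verts ∩ Metric.ball z ρ →
    ∃ (m : ℕ) (p : ℕ → ℂ), p 0 = u ∧ p m = v ∧
      (∀ i ≤ m, p i ∈ verts ∩ Metric.ball z ρ) ∧
      (∀ i < m, p (i + 1) ∈ nbrs (p i)) ∧
      (m : ℝ) * δ ≤ (dist u v + δ) * (8 / η)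

/-- `H` is discrete harmonic at the vertex `u` of the isoradial graph `G`. -/
def IsoradialGraph.HarmAt {δ η : ℝ} (G : IsoradialGraph δ η) (H : ℂ → ℝ) (u : ℂ) : Prop :=
  ∑ v ∈ G.nbrs u, Real.tan (G.halfAngle u v) * (H v - H u) = 0

open Metric Finset

namespace IsoAux

variable {δ η : ℝ}

lemma cond_bounds (hη₀ : 0 < η) (hη₁ : η < Real.pi / 4) (G : IsoradialGraph δ η)
    {u v : ℂ} (hu : u ∈ G.verts) (hv : v ∈ G.nbrs u) :
    Real.tan η ≤ Real.tan (G.halfAngle u v) ∧ Real.tan (G.halfAngle u v) ≤ (Real.tan η)⁻¹ := by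
  have h := G.halfAngle_mem u hu v hv
  obtain ⟨h1, h2⟩ := h
  have hm := Real.strictMonoOn_tan.monotoneOn
  constructor
  · exact hm ⟨by linarith, by linarith⟩ ⟨by linarith, by linarith⟩ h1
  · rw [← Real.tan_pi_div_two_sub]
    exact hm ⟨by linarith, by linarith⟩ ⟨by linarith, by linarith⟩ h2

lemma tan_eta_pos (hη₀ : 0 < η) (hη₁ : η < Real.pi / 4) : 0 < Real.tan η :=
  Real.tan_pos_of_pos_of_lt_pi_div_two hη₀ (by linarith [Real.pi_pos])

lemma sin_eta_pos (hη₀ : 0 < η) (hη₁ : η < Real.pi / 4) : 0 < Real.sin η :=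
  Real.sin_pos_of_pos_of_lt_pi hη₀ (by linarith [Real.pi_pos])

lemma len_bounds (hδ : 0 < δ) (hη₀ : 0 < η) (hη₁ : η < Real.pi / 4) (G : IsoradialGraph δ η)
    {u v : ℂ} (hu : u ∈ G.verts) (hv : v ∈ G.nbrs u) :
    2 * δ * Real.sin η ≤ ‖v - u‖ ∧ ‖v - u‖ ≤ 2 * δ := by
  have h := G.halfAngle_mem u hu v hv
  obtain ⟨h1, h2⟩ := h
  have e := G.edge_len u hu v hv
  rw [dist_eq_norm] at e
  rw [e]
  have h3 : Real.sin η ≤ Real.cos (G.halfAngle u v) := by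
    rw [← Real.cos_pi_div_two_sub]
    exact Real.cos_le_cos_of_nonneg_of_le_pi (by linarith) (by linarith [Real.pi_pos]) h2
  have h4 := Real.cos_le_one (G.halfAngle u v)
  constructor <;> nlinarith

lemma cond_sum_pos (hη₀ : 0 < η) (hη₁ : η < Real.pi / 4) (G : IsoradialGraph δ η)
    {u : ℂ} (hu : u ∈ G.verts) : 0 < ∑ v ∈ G.nbrs u, Real.tan (G.halfAngle u v) :=
  Finset.sum_pos (fun v hv => lt_of_lt_of_le (tan_eta_pos hη₀ hη₁)
    (cond_bounds hη₀ hη₁ G hu hv).1) (G.nbrs_nonempty u hu)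

/-- the squared distance is strictly subharmonic -/
lemma lap_sq (hδ : 0 < δ) (hη₀ : 0 < η) (hη₁ : η < Real.pi / 4) (G : IsoradialGraph δ η)
    {u : ℂ} (hu : u ∈ G.verts) (z : ℂ) :
    0 < ∑ v ∈ G.nbrs u, Real.tan (G.halfAngle u v) * (‖v - z‖ ^ 2 - ‖u - z‖ ^ 2) := by
  have h1 : ∑ v ∈ G.nbrs u, Real.tan (G.halfAngle u v) * (‖v - z‖ ^ 2 - ‖u - z‖ ^ 2)
      = ∑ v ∈ G.nbrs u, Real.tan (G.halfAngle u v) * ‖v - u‖ ^ 2 := by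
    have hl := G.lin_harm u hu
    have hl2 : ((2 * (starRingEnd ℂ) (u - z)) *
      ∑ v ∈ G.nbrs u, (Real.tan (G.halfAngle u v) : ℂ) * (v - u)).re = 0 := by
      rw [hl]; simp
    rw [Finset.mul_sum, Complex.re_sum] at hl2
    rw [← sub_eq_zero, ← Finset.sum_sub_distrib, ← hl2]
    refine Finset.sum_congr rfl fun v _ => ?_
    simp only [← Complex.normSq_eq_norm_sq, Complex.normSq_apply, Complex.mul_re, Complex.mul_im,
      Complex.sub_re, Complex.sub_im, Complex.ofReal_re, Complex.ofReal_im, Complex.conj_re,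
      Complex.conj_im, map_sub, Complex.re_ofNat, Complex.im_ofNat]
    ring
  rw [h1]
  refine Finset.sum_pos (fun v hv => mul_pos (lt_of_lt_of_le (tan_eta_pos hη₀ hη₁)
    (cond_bounds hη₀ hη₁ G hu hv).1) ?_) (G.nbrs_nonempty u hu)
  have := (len_bounds hδ hη₀ hη₁ G hu hv).1
  have h2 := sin_eta_pos hη₀ hη₁
  have : 0 < ‖v - u‖ := lt_of_lt_of_le (by positivity) this
  positivity

/-- quantitative half plane property -/
lemma half_plane (hδ : 0 < δ) (hη₀ : 0 < η) (hη₁ : η < Real.pi / 4) (G : IsoradialGraph δ η)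
    {u : ℂ} (hu : u ∈ G.verts) (e : ℂ) (he : ‖e‖ = 1) :
    ∃ v ∈ G.nbrs u, Real.sin η ^ 2 / 2 * δ ≤ (e * (v - u)).re := by
  by_contra! hcon
  have hs := sin_eta_pos hη₀ hη₁
  set κ := Real.sin η ^ 2 / 2 with hκ
  have hl : ∑ v ∈ G.nbrs u, Real.tan (G.halfAngle u v) * (e * (v - u)).re = 0 := by
    have hl2 : (e * ∑ v ∈ G.nbrs u, (Real.tan (G.halfAngle u v) : ℂ) * (v - u)).re = 0 := by
      rw [G.lin_harm u hu]; simp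
    rw [Finset.mul_sum, Complex.re_sum] at hl2
    rw [← hl2]
    refine Finset.sum_congr rfl fun v _ => ?_
    rw [mul_left_comm, Complex.re_ofReal_mul]
  have hq : ∑ v ∈ G.nbrs u, Real.tan (G.halfAngle u v) * ((e * (v - u)) ^ 2).re = 0 := by
    have hl2 : (e ^ 2 * (∑ v ∈ G.nbrs u, (Real.tan (G.halfAngle u v) : ℂ) * (v ^ 2 - u ^ 2)
        - 2 * u * ∑ v ∈ G.nbrs u, (Real.tan (G.halfAngle u v) : ℂ) * (v - u))).re = 0 := by
      rw [G.lin_harm u hu, G.quad_harm u hu]; simp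
    rw [Finset.mul_sum, ← Finset.sum_sub_distrib, Finset.mul_sum, Complex.re_sum] at hl2
    rw [← hl2]
    refine Finset.sum_congr rfl fun v _ => ?_
    rw [← Complex.re_ofReal_mul]
    congr 1
    ring
  have hS := cond_sum_pos hη₀ hη₁ G hu
  have key : 0 < ∑ v ∈ G.nbrs u, (Real.tan (G.halfAngle u v) * ((κ - 2) * δ * (e * (v - u)).re)
      + Real.tan (G.halfAngle u v) * (2 * κ * δ ^ 2)
      - Real.tan (G.halfAngle u v) * ((2 * δ * Real.sin η) ^ 2 / 2 )
      - 1/2 * (Real.tan (G.halfAngle u v) * ((e * (v - u)) ^ 2).re)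
      + Real.tan (G.halfAngle u v) * (κ * δ ^ 2)) := by
    refine Finset.sum_pos (fun v hv => ?_) (G.nbrs_nonempty u hu)
    have hc : 0 < Real.tan (G.halfAngle u v) := lt_of_lt_of_le (tan_eta_pos hη₀ hη₁)
      (cond_bounds hη₀ hη₁ G hu hv).1
    obtain ⟨b1, b2⟩ := len_bounds hδ hη₀ hη₁ G hu hv
    have hx := hcon v hv
    have hw : ‖e * (v - u)‖ = ‖v - u‖ := by rw [norm_mul, he, one_mul]
    rw [← hw] at b1 b2
    generalize e * (v - u) = w at *
    have hre := (abs_le.1 (Complex.abs_re_le_norm w)).1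
    have hid : w.re ^ 2 = (‖w‖ ^ 2 + (w ^ 2).re) / 2 := by
      rw [← Complex.normSq_eq_norm_sq, Complex.normSq_apply, pow_two w, Complex.mul_re]; ring
    have h1 : (2 * δ * Real.sin η) ^ 2 ≤ ‖w‖ ^ 2 := by
      apply pow_le_pow_left₀ (by positivity) b1
    have h2 : 0 ≤ (w.re + 2 * δ) * (κ * δ - w.re) :=
      mul_nonneg (by linarith) (by linarith)
    have h3 : 0 < κ * δ ^ 2 := by positivity
    have : 0 < (κ - 2) * δ * w.re + 2 * κ * δ ^ 2 - (2 * δ * Real.sin η) ^ 2 / 2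
      - 1/2 * (w ^ 2).re + κ * δ ^ 2 := by nlinarith
    nlinarith [mul_pos hc this]
  simp only [Finset.sum_add_distrib, Finset.sum_sub_distrib] at key
  rw [← Finset.mul_sum, hq] at key
  have h5 : ∑ v ∈ G.nbrs u, Real.tan (G.halfAngle u v) * ((κ - 2) * δ * (e * (v - u)).re) = 0 := by
    rw [show (0:ℝ) = (κ - 2) * δ * 0 by ring, ← hl, Finset.mul_sum]
    exact Finset.sum_congr rfl fun v _ => by ring
  rw [h5, ← Finset.sum_mul, ← Finset.sum_mul, ← Finset.sum_mul] at key
  set S := ∑ v ∈ G.nbrs u, Real.tan (G.halfAngle u v)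
  have : 0 ≤ S * δ ^ 2 * Real.sin η ^ 2 := by positivity
  rw [hκ] at key
  nlinarith

/-- vertices are separated -/
lemma separated (hδ : 0 < δ) (hη₀ : 0 < η) (hη₁ : η < Real.pi / 4) (G : IsoradialGraph δ η)
    {u v : ℂ} (hu : u ∈ G.verts) (hv : v ∈ G.verts) (h : dist u v < 2 * δ * Real.sin η) :
    u = v := by
  set z := (u + v) / 2 with hz
  have hs := sin_eta_pos hη₀ hη₁
  have hd : dist u z = dist u v / 2 := by
    rw [dist_eq_norm, dist_eq_norm, hz, show u - (u + v) / 2 = (u - v) / 2 by ring]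
    simp
  have hd' : dist v z = dist u v / 2 := by
    rw [dist_comm u v, dist_eq_norm, dist_eq_norm, hz, show v - (u + v) / 2 = (v - u) / 2 by ring]
    simp
  obtain ⟨m, p, h0, hm, hin, hst, -⟩ := G.path_in_ball z (δ * Real.sin η) u v
    ⟨hu, by rw [mem_ball, hd]; linarith⟩ ⟨hv, by rw [mem_ball, hd']; linarith⟩
  rcases Nat.eq_zero_or_pos m with hm0 | hm0
  · subst hm0; rw [← h0, ← hm]
  · exfalso
    have a0 := hin 0 (by omega)
    have a1 := hin 1 (by omega)
    have l := (len_bounds hδ hη₀ hη₁ G a0.1 (hst 0 hm0)).1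
    rw [← dist_eq_norm] at l
    have t := dist_triangle_right (p (0 + 1)) (p 0) z
    have b0 := mem_ball.1 a0.2
    have b1 := mem_ball.1 a1.2
    simp only [zero_add] at *
    linarith

/-- degree bound -/
lemma deg_bound (hη₀ : 0 < η) (hη₁ : η < Real.pi / 4) :
    ∃ D : ℕ, 1 ≤ D ∧ ∀ δ : ℝ, 0 < δ → ∀ G : IsoradialGraph δ η, ∀ u ∈ G.verts,
      (G.nbrs u).card ≤ D := by
  have hs := sin_eta_pos hη₀ hη₁
  obtain ⟨N, hN⟩ := exists_nat_gt (2 / Real.sin η)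
  set B : Finset (ℤ × ℤ) := Finset.Icc (-(N:ℤ)) N ×ˢ Finset.Icc (-(N:ℤ)) N with hB
  refine ⟨B.card + 1, by omega, fun δ hδ G u hu => ?_⟩
  refine le_trans ?_ (Nat.le_succ _)
  set s := δ * Real.sin η with hsd
  have hs0 : 0 < s := by positivity
  have hbox : ∀ x : ℝ, |x| ≤ 2 * δ → ⌊x / s⌋ ∈ Finset.Icc (-(N:ℤ)) N := by
    intro x hx
    have h1 : |x / s| < N := by
      rw [abs_div, abs_of_pos hs0]
      refine lt_of_le_of_lt ?_ hN
      rw [div_le_div_iff₀ hs0 hs, hsd]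
      nlinarith
    rw [abs_lt] at h1
    rw [Finset.mem_Icc]
    constructor
    · rw [Int.le_floor]; push_cast; linarith
    · have : ((⌊x / s⌋ : ℤ) : ℝ) < ((N : ℤ) : ℝ) := by
        push_cast; exact lt_of_le_of_lt (Int.floor_le _) h1.2
      exact (Int.cast_lt.1 this).le
  refine Finset.card_le_card_of_injOn (fun v => (⌊(v - u).re / s⌋, ⌊(v - u).im / s⌋)) ?_ ?_
  · intro v hv
    have hl := (len_bounds hδ hη₀ hη₁ G hu hv).2
    rw [hB]
    simp only [Finset.coe_product, Set.mem_prod, Finset.mem_coe]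
    exact ⟨hbox _ ((Complex.abs_re_le_norm _).trans hl), hbox _ ((Complex.abs_im_le_norm _).trans hl)⟩
  · intro v hv w hw hvw
    simp only [Prod.mk.injEq] at hvw
    have hfl : ∀ x y : ℝ, ⌊x / s⌋ = ⌊y / s⌋ → |x - y| < s := by
      intro x y h
      have := Int.abs_sub_lt_one_of_floor_eq_floor h
      rwa [← sub_div, abs_div, abs_of_pos hs0, div_lt_one hs0] at this
    have h1 := hfl _ _ hvw.1
    have h2 := hfl _ _ hvw.2
    refine separated hδ hη₀ hη₁ G (G.nbrs_sub u hu v hv) (G.nbrs_sub u hu w hw) ?_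
    rw [dist_eq_norm]
    have h3 := Complex.norm_le_abs_re_add_abs_im (v - w)
    have e1 : (v - w).re = (v - u).re - (w - u).re := by simp
    have e2 : (v - w).im = (v - u).im - (w - u).im := by simp
    rw [e1, e2] at h3
    calc _ ≤ _ := h3
      _ < s + s := by linarith
      _ = _ := by rw [hsd]; ring

/-- minimum principle -/
lemma min_principle (hδ : 0 < δ) (hη₀ : 0 < η) (hη₁ : η < Real.pi / 4) (G : IsoradialGraph δ η)
    (I B : Finset ℂ) (hI : ∀ u ∈ I, u ∈ G.verts)
    (hB : ∀ u ∈ I, ∀ v ∈ G.nbrs u, v ∈ I ∨ v ∈ B) (h : ℂ → ℝ) (m : ℝ)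
    (hsup : ∀ u ∈ I, ∑ v ∈ G.nbrs u, Real.tan (G.halfAngle u v) * (h v - h u) ≤ 0)
    (hm : ∀ b ∈ B, m ≤ h b) : ∀ u ∈ I, m ≤ h u := by
  classical
  intro u hu
  set M := ∑ b ∈ B, ‖b‖ ^ 2 with hM
  have hM0 : 0 ≤ M := Finset.sum_nonneg fun b _ => by positivity
  have main : ∀ ε : ℝ, 0 < ε → m - ε * M ≤ h u := by
    intro ε hε
    obtain ⟨x, hx, hmin⟩ := Finset.exists_min_image (I ∪ B) (fun x => h x - ε * ‖x‖ ^ 2)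
      ⟨u, Finset.mem_union_left _ hu⟩
    have hxB : x ∈ B := by
      by_contra hxB
      have hxI : x ∈ I := by
        rcases Finset.mem_union.1 hx with h1 | h1
        · exact h1
        · exact absurd h1 hxB
      have h1 := hsup x hxI
      have h2 := lap_sq hδ hη₀ hη₁ G (hI x hxI) 0
      have h3 : 0 ≤ ∑ v ∈ G.nbrs x, (Real.tan (G.halfAngle x v) * (h v - h x) -
          ε * (Real.tan (G.halfAngle x v) * (‖v - 0‖ ^ 2 - ‖x - 0‖ ^ 2))) := by
        refine Finset.sum_nonneg fun v hv => ?_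
        have hc : 0 < Real.tan (G.halfAngle x v) := lt_of_lt_of_le (tan_eta_pos hη₀ hη₁)
          (cond_bounds hη₀ hη₁ G (hI x hxI) hv).1
        have := hmin v (Finset.mem_union.2 (hB x hxI v hv))
        simp only [sub_zero]
        have h4 : 0 ≤ (h v - ε * ‖v‖ ^ 2) - (h x - ε * ‖x‖ ^ 2) := by linarith
        nlinarith [mul_nonneg hc.le h4]
      rw [Finset.sum_sub_distrib, ← Finset.mul_sum] at h3
      nlinarith
    have h1 := hmin u (Finset.mem_union_left _ hu)
    have h2 := hm x hxB
    have h3 : ‖x‖ ^ 2 ≤ M := Finset.single_le_sum (f := fun b : ℂ => ‖b‖ ^ 2)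
      (fun b _ => by positivity) hxB
    have h4 : 0 ≤ ε * ‖u‖ ^ 2 := by positivity
    nlinarith
  refine le_of_forall_pos_lt_add fun e he => ?_
  have := main (e / (M + 1)) (by positivity)
  have h2 : e / (M + 1) * M < e := by
    rw [div_mul_eq_mul_div, div_lt_iff₀ (by positivity)]; nlinarith
  linarith

/-- Green's formula -/
lemma green (G : IsoradialGraph δ η)
    (I B : Finset ℂ) (hIB : ∀ b ∈ B, b ∉ I)
    (hB : ∀ u ∈ I, ∀ v ∈ G.nbrs u, v ∈ I ∨ v ∈ B) (u₀ a : ℂ) (hu₀ : u₀ ∈ I) (ha : a ∈ B)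
    (g w : ℂ → ℝ) (hg0 : ∀ b ∈ B, g b = 0)
    (hg : ∀ u ∈ I, u ≠ u₀ → G.HarmAt g u)
    (hg1 : ∑ v ∈ G.nbrs u₀, Real.tan (G.halfAngle u₀ v) * (g v - g u₀) = -1)
    (hw : ∀ u ∈ I, G.HarmAt w u) (hwa : w a = 1) (hwb : ∀ b ∈ B, b ≠ a → w b = 0) :
    w u₀ = ∑ u ∈ I with a ∈ G.nbrs u, Real.tan (G.halfAngle u a) * g u := by
  classical
  have e1 : ∑ u ∈ I, (w u * (∑ v ∈ G.nbrs u, Real.tan (G.halfAngle u v) * (g v - g u))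
      - g u * (∑ v ∈ G.nbrs u, Real.tan (G.halfAngle u v) * (w v - w u))) = - w u₀ := by
    rw [Finset.sum_eq_single_of_mem u₀ hu₀]
    · rw [hg1, show (∑ v ∈ G.nbrs u₀, Real.tan (G.halfAngle u₀ v) * (w v - w u₀)) = 0 from
        hw u₀ hu₀]; ring
    · intro u hu hne
      rw [show (∑ v ∈ G.nbrs u, Real.tan (G.halfAngle u v) * (w v - w u)) = 0 from hw u hu,
        show (∑ v ∈ G.nbrs u, Real.tan (G.halfAngle u v) * (g v - g u)) = 0 from hg u hu hne]
      ring
  set k : ℂ → ℂ → ℝ := fun u v => if v ∈ G.nbrs u then Real.tan (G.halfAngle u v) else 0 with hk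
  have ksymm : ∀ u v, k u v = k v u := by
    intro u v
    simp only [hk, G.nbrs_symm u v, G.halfAngle_symm u v]
  have e2 : ∀ u ∈ I, (w u * (∑ v ∈ G.nbrs u, Real.tan (G.halfAngle u v) * (g v - g u))
      - g u * (∑ v ∈ G.nbrs u, Real.tan (G.halfAngle u v) * (w v - w u)))
      = ∑ v ∈ I, k u v * (w u * g v - g u * w v) - k u a * g u := by
    intro u hu
    have hsub : G.nbrs u ⊆ I ∪ B := fun v hv => Finset.mem_union.2 (hB u hu v hv)
    have hdisj : Disjoint I B := Finset.disjoint_left.2 fun x hx hxB => hIB x hxB hx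
    rw [Finset.mul_sum, Finset.mul_sum, ← Finset.sum_sub_distrib]
    have s1 : ∑ v ∈ G.nbrs u, (w u * (Real.tan (G.halfAngle u v) * (g v - g u))
        - g u * (Real.tan (G.halfAngle u v) * (w v - w u)))
        = ∑ v ∈ I ∪ B, k u v * (w u * g v - g u * w v) := by
      rw [← Finset.sum_subset hsub]
      · refine Finset.sum_congr rfl fun v hv => ?_
        simp only [hk, if_pos hv]; ring
      · intro v _ hv
        simp only [hk, if_neg hv]; ring
    rw [s1, Finset.sum_union hdisj]
    have s2 : ∑ v ∈ B, k u v * (w u * g v - g u * w v) = - (k u a * g u) := by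
      rw [Finset.sum_eq_single_of_mem a ha]
      · rw [hg0 a ha, hwa]; ring
      · intro b hb hne
        rw [hg0 b hb, hwb b hb hne]; ring
    rw [s2]; ring
  rw [Finset.sum_congr rfl e2, Finset.sum_sub_distrib] at e1
  have e3 : ∑ u ∈ I, ∑ v ∈ I, k u v * (w u * g v - g u * w v) = 0 := by
    have h1 : ∑ u ∈ I, ∑ v ∈ I, k u v * (w u * g v - g u * w v)
        = - ∑ u ∈ I, ∑ v ∈ I, k u v * (w u * g v - g u * w v) := by
      conv_lhs => rw [Finset.sum_comm]
      rw [← Finset.sum_neg_distrib]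
      refine Finset.sum_congr rfl fun u _ => ?_
      rw [← Finset.sum_neg_distrib]
      refine Finset.sum_congr rfl fun v _ => ?_
      rw [ksymm v u]; ring
    linarith
  rw [e3] at e1
  have e4 : ∑ u ∈ I, k u a * g u
      = ∑ u ∈ I with a ∈ G.nbrs u, Real.tan (G.halfAngle u a) * g u := by
    rw [Finset.sum_filter]
    refine Finset.sum_congr rfl fun u _ => ?_
    simp only [hk]
    split_ifs <;> simp
  linarith

/-- Harnack step -/
lemma harnack_step (hη₀ : 0 < η) (hη₁ : η < Real.pi / 4) (G : IsoradialGraph δ η)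
    (D : ℕ) (hD : 1 ≤ D) {u v : ℂ} (hu : u ∈ G.verts) (hv : v ∈ G.nbrs u)
    (hdeg : (G.nbrs u).card ≤ D) (g : ℂ → ℝ) (hgu : 0 ≤ g u) (hg : ∀ w ∈ G.nbrs u, 0 ≤ g w)
    (hh : G.HarmAt g u) : Real.tan η ^ 2 / D * g v ≤ g u := by
  have ht := tan_eta_pos hη₀ hη₁
  have hD' : (0:ℝ) < D := by exact_mod_cast hD
  have h1 : ∑ w ∈ G.nbrs u, Real.tan (G.halfAngle u w) * (g w - g u) = 0 := hh
  simp only [mul_sub, Finset.sum_sub_distrib] at h1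
  rw [← Finset.sum_mul] at h1
  have h2 : Real.tan (G.halfAngle u v) * g v ≤ ∑ w ∈ G.nbrs u, Real.tan (G.halfAngle u w) * g w :=
    Finset.single_le_sum (f := fun w => Real.tan (G.halfAngle u w) * g w)
      (fun w hw => mul_nonneg (ht.le.trans (cond_bounds hη₀ hη₁ G hu hw).1) (hg w hw)) hv
  have h3 : ∑ w ∈ G.nbrs u, Real.tan (G.halfAngle u w) ≤ D * (Real.tan η)⁻¹ := by
    refine (Finset.sum_le_card_nsmul _ _ _
      (fun w hw => (cond_bounds hη₀ hη₁ G hu hw).2)).trans ?_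
    rw [nsmul_eq_mul]
    gcongr
  have h4 := mul_le_mul_of_nonneg_right (cond_bounds hη₀ hη₁ G hu hv).1 (hg v hv)
  have h5 := mul_le_mul_of_nonneg_right h3 hgu
  have h6 : Real.tan η * g v ≤ D * (Real.tan η)⁻¹ * g u := by linarith
  rw [div_mul_eq_mul_div, div_le_iff₀ hD']
  have h7 := mul_le_mul_of_nonneg_left h6 ht.le
  have : Real.tan η * (D * (Real.tan η)⁻¹ * g u) = g u * D := by
    field_simp
  nlinarith

/-- moving towards the centre -/
lemma inward (hδ : 0 < δ) (hη₀ : 0 < η) (hη₁ : η < Real.pi / 4) (G : IsoradialGraph δ η)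
    {u u₀ : ℂ} (hu : u ∈ G.verts) (hr : 8 * δ ≤ Real.sin η ^ 2 * dist u u₀) :
    ∃ v ∈ G.nbrs u, dist v u₀ ≤ dist u u₀ - Real.sin η ^ 2 / 4 * δ ∧
      dist u u₀ - 2 * δ ≤ dist v u₀ := by
  have hs := sin_eta_pos hη₀ hη₁
  have hs1 := Real.sin_le_one η
  have hs2 : Real.sin η ^ 2 ≤ 1 := by nlinarith
  set s := Real.sin η ^ 2 with hsd
  have hs0 : 0 < s := by positivity
  have hr8 : 8 * δ ≤ dist u u₀ := by nlinarith [dist_nonneg (x := u) (y := u₀)]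
  have hrp : 0 < dist u u₀ := by linarith
  rw [dist_eq_norm] at hr hr8 hrp
  set r := ‖u - u₀‖ with hrd
  obtain ⟨v, hv, hx⟩ := half_plane hδ hη₀ hη₁ G hu (-(starRingEnd ℂ (u - u₀)) / (r : ℂ)) (by
    rw [norm_div, norm_neg, Complex.norm_conj, Complex.norm_real, Real.norm_eq_abs,
      abs_of_pos hrp, ← hrd, div_self hrp.ne'])
  have hl := (len_bounds hδ hη₀ hη₁ G hu hv).2
  refine ⟨v, hv, ?_, ?_⟩
  · rw [dist_eq_norm, dist_eq_norm, ← hrd]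
    have hx2 : (-(starRingEnd ℂ (u - u₀)) / (r : ℂ) * (v - u)).re * r
        = -((starRingEnd ℂ (u - u₀)) * (v - u)).re := by
      rw [div_mul_eq_mul_div, Complex.div_ofReal_re, div_mul_cancel₀ _ hrp.ne']
      simp; ring
    have hid : ‖v - u₀‖ ^ 2 = r ^ 2 + 2 * ((starRingEnd ℂ (u - u₀)) * (v - u)).re
        + ‖v - u‖ ^ 2 := by
      rw [hrd]
      simp only [← Complex.normSq_eq_norm_sq, Complex.normSq_apply, Complex.mul_re,
        Complex.sub_re, Complex.sub_im, Complex.conj_re, Complex.conj_im, map_sub]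
      ring
    have h1 := mul_le_mul_of_nonneg_right hx hrp.le
    rw [hx2] at h1
    have h2 : ‖v - u‖ ^ 2 ≤ (2 * δ) ^ 2 := pow_le_pow_left₀ (norm_nonneg _) hl 2
    have h3 : 0 ≤ r - s / 4 * δ := by nlinarith
    refine abs_le_of_sq_le_sq' ?_ h3 |>.2
    have h4 := mul_le_mul_of_nonneg_left hr hδ.le
    nlinarith [sq_nonneg (s / 4 * δ)]
  · have := dist_triangle u v u₀
    have e : dist u v = ‖v - u‖ := by rw [dist_comm, dist_eq_norm]
    linarith

lemma log_est {δ R r : ℝ} (hδ : 0 < δ) (hR : 10 * δ ≤ R) (x : ℝ) (hr : r = R + x * δ)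
    (hr0 : 0 < r) : Real.log r ≤ Real.log R + x * (δ / R) ∧
      Real.log R + x * δ / r ≤ Real.log r := by
  have hR0 : 0 < R := by linarith
  have e : Real.log r - Real.log R = Real.log (r / R) := (Real.log_div hr0.ne' hR0.ne').symm
  have hp : 0 < r / R := by positivity
  have h1 := Real.log_le_sub_one_of_pos hp
  have h2 := Real.one_sub_inv_le_log_of_pos hp
  have e1 : r / R - 1 = x * (δ / R) := by rw [hr]; field_simp; ring
  have e2 : 1 - (r / R)⁻¹ = x * δ / r := by
    rw [inv_div, eq_div_iff hr0.ne', sub_mul, div_mul_cancel₀ _ hr0.ne', hr]; ring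
  constructor <;> linarith

lemma log_lower {δ R r : ℝ} (hδ : 0 < δ) (hR : 10 * δ ≤ R) (hr : R - 5 * δ ≤ r) :
    Real.log R - 10 * (δ / R) ≤ Real.log r := by
  have hR0 : 0 < R := by linarith
  have h1 := (log_est hδ hR (r := R - 5 * δ) (-5) (by ring) (by linarith)).2
  have h2 : Real.log (R - 5 * δ) ≤ Real.log r := Real.log_le_log (by linarith) hr
  have h3 : 5 * δ / (R - 5 * δ) ≤ 10 * (δ / R) := by
    rw [mul_div_assoc', div_le_div_iff₀ (by linarith) hR0]; nlinarith
  have h4 : -5 * δ / (R - 5 * δ) = -(5 * δ / (R - 5 * δ)) := by ring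
  linarith

lemma log_upper {δ R r : ℝ} (hδ : 0 < δ) (hR : 10 * δ ≤ R) (x : ℝ) (hr0 : 0 < r)
    (hr : r ≤ R + x * δ) :
    Real.log r ≤ Real.log R + x * (δ / R) := by
  have h1 := (log_est hδ hR (r := R + x * δ) x rfl (by linarith)).1
  have h2 : Real.log r ≤ Real.log (R + x * δ) := Real.log_le_log hr0 hr
  linarith

end IsoAux

set_option maxHeartbeats 2000000

/-- Proposition A.1, exit probabilities in a discretized disc: Suppose
the free Green's function of an isoradial graph satisfies
`|G_Γ(u; u₀) − (2π)⁻¹ log |u − u₀|| ≤ C δ² / |u − u₀|²` for `u ≠ u₀`. Then, for the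
discretized disc `B^δ_Γ(u₀, R)` with `R/δ` sufficiently large, the Green's function
`G_{B^δ_Γ(u₀,R)}(u; u₀) = G_Γ(u; u₀) − ∑_{a ∈ ∂} ω^δ(u; {a}) G_Γ(a; u₀)` satisfies
`|G_{B^δ_Γ(u₀,R)}(u; u₀)| ≍ δ/R` for all vertices `u` with
`R − 5δ ≤ |u − u₀| ≤ R − 3δ`; consequently (via the identity
`ω^δ(u₀; {a}) = −tan θ_{a a_int}·G_{B^δ_Γ(u₀,R)}(a_int; u₀)`) the exit probability
at each boundary vertex satisfies `ω^δ(u₀; {a}; B^δ_Γ(u₀, R)) ≍ δ/R`. -/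
theorem exit_probabilities_in_disc (η C : ℝ) (hη₀ : 0 < η) (hη₁ : η < Real.pi / 4)
    (hC : 0 < C) :
    ∃ K c₁ c₂ : ℝ, 1 ≤ K ∧ 0 < c₁ ∧ 0 < c₂ ∧
      ∀ (δ : ℝ), 0 < δ →
      ∀ (R : ℝ), K * δ ≤ R →
      ∀ (G : IsoradialGraph δ η) (u₀ : ℂ), u₀ ∈ G.verts →
      ∀ (IntF Bd : Finset ℂ),
      (∀ v, v ∈ IntF ↔ v ∈ G.verts ∩ ball u₀ R) →
      (∀ a, a ∈ Bd ↔ (a ∉ IntF ∧ ∃ v ∈ IntF, a ∈ G.nbrs v)) →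
      u₀ ∈ IntF →
      ∀ (Gfree : ℂ → ℝ),
      (∀ u ∈ G.verts, u ≠ u₀ → G.HarmAt Gfree u) →
      (∑ v ∈ G.nbrs u₀, Real.tan (G.halfAngle u₀ v) * (Gfree v - Gfree u₀)) = 1 →
      (∀ u ∈ G.verts, u ≠ u₀ →
        |Gfree u - (2 * Real.pi)⁻¹ * Real.log (dist u u₀)|
          ≤ C * δ ^ 2 / dist u u₀ ^ 2) →
      ∀ (ω : ℂ → ℂ → ℝ),
      (∀ a ∈ Bd,
        (∀ u ∈ IntF, G.HarmAt (fun w => ω w a) u) ∧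
        ω a a = 1 ∧ (∀ b ∈ Bd, b ≠ a → ω b a = 0)) →
      ((∀ u ∈ IntF, R - 5 * δ ≤ dist u u₀ → dist u u₀ ≤ R - 3 * δ →
          c₁ * δ / R ≤ |Gfree u - ∑ a ∈ Bd, ω u a * Gfree a| ∧
          |Gfree u - ∑ a ∈ Bd, ω u a * Gfree a| ≤ c₂ * δ / R) ∧
       (∀ a ∈ Bd, c₁ * δ / R ≤ ω u₀ a ∧ ω u₀ a ≤ c₂ * δ / R)) := by
  classical
  have ht := IsoAux.tan_eta_pos hη₀ hη₁
  have hsin := IsoAux.sin_eta_pos hη₀ hη₁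
  have ht1 : Real.tan η ≤ 1 := by
    rw [← Real.tan_pi_div_four]
    exact Real.strictMonoOn_tan.monotoneOn ⟨by linarith, by linarith⟩
      ⟨by linarith, by linarith⟩ hη₁.le
  obtain ⟨D, hD1, hD⟩ := IsoAux.deg_bound hη₀ hη₁
  have hD1' : (1:ℝ) ≤ D := by exact_mod_cast hD1
  set s := Real.sin η ^ 2 with hs
  have hs0 : 0 < s := by positivity
  obtain ⟨N, hN⟩ := exists_nat_gt (12 / s)
  have hN' : 3 ≤ N * (s / 4) := by
    rw [div_lt_iff₀ hs0] at hN; linarith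
  set q := Real.tan η ^ 2 / D with hq
  have hq0 : 0 < q := by positivity
  have hq1 : q ≤ 1 := by
    rw [hq, div_le_one (by positivity)]; nlinarith
  have hqN : q ^ N ≤ 1 := pow_le_one₀ hq0.le hq1
  have hqN0 : 0 < q ^ N := by positivity
  refine ⟨10 + 40 * C + 16 / s, Real.tan η * (q ^ N / 4), D * (Real.tan η)⁻¹ * (2 + 5 * C),
    by have : 0 < 16 / s := by positivity
       linarith, by positivity, by positivity, ?_⟩
  intro δ hδ R hKR G u₀ hu₀ IntF Bd hInt hBd hu₀I Gfree hharm hlap hasymp ω hω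
  -- basic consequences
  have h16 : 0 < 16 / s := by positivity
  have hR10 : 10 * δ ≤ R := by nlinarith [mul_pos h16 hδ, mul_pos hC hδ]
  have hRC : 40 * C * δ ≤ R := by nlinarith [mul_pos h16 hδ]
  have hRs : 16 * δ ≤ s * R := by
    have : 16 / s * δ ≤ R := by nlinarith [mul_pos hC hδ]
    rw [div_mul_eq_mul_div, div_le_iff₀ hs0] at this
    linarith
  have hR0 : 0 < R := by linarith
  set t := δ / R with htd
  have ht0 : 0 < t := by positivity
  have htR : t * R = δ := div_mul_cancel₀ _ hR0.ne'
  have ht10 : t ≤ 1 := by rw [htd, div_le_one hR0]; linarith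
  have htC : 40 * (C * t) ≤ 1 := by
    rw [htd, mul_div_assoc', mul_div_assoc', div_le_one hR0]; linarith
  have hIv : ∀ u ∈ IntF, u ∈ G.verts := fun u hu => ((hInt u).1 hu).1
  have hId : ∀ u ∈ IntF, dist u u₀ < R := fun u hu => mem_ball.1 ((hInt u).1 hu).2
  have hIB : ∀ b ∈ Bd, b ∉ IntF := fun b hb => ((hBd b).1 hb).1
  have hN2 : ∀ u ∈ IntF, ∀ v ∈ G.nbrs u, v ∈ IntF ∨ v ∈ Bd := by
    intro u hu v hv
    by_cases h : v ∈ IntF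
    · exact Or.inl h
    · exact Or.inr ((hBd v).2 ⟨h, u, hu, hv⟩)
  have hBv : ∀ b ∈ Bd, b ∈ G.verts := by
    intro b hb
    obtain ⟨-, v, hv, hvb⟩ := (hBd b).1 hb
    exact G.nbrs_sub v (hIv v hv) b hvb
  have hBd1 : ∀ b ∈ Bd, R ≤ dist b u₀ := by
    intro b hb
    by_contra! h
    exact hIB b hb ((hInt b).2 ⟨hBv b hb, mem_ball.2 h⟩)
  have hadj : ∀ v ∈ IntF, ∀ b ∈ G.nbrs v, dist b v ≤ 2 * δ := by
    intro v hv b hb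
    rw [dist_eq_norm]
    exact (IsoAux.len_bounds hδ hη₀ hη₁ G (hIv v hv) hb).2
  have hBd2 : ∀ b ∈ Bd, dist b u₀ ≤ R + 2 * δ := by
    intro b hb
    obtain ⟨-, v, hv, hvb⟩ := (hBd b).1 hb
    have := dist_triangle b v u₀
    linarith [hadj v hv b hvb, hId v hv]
  -- asymptotics
  set p := (2 * Real.pi)⁻¹ with hp
  have hp0 : 0 < p := by positivity
  have hp1 : p * 6 ≤ 1 := by
    rw [hp, inv_mul_le_iff₀ (by positivity)]; linarith [Real.pi_gt_three]
  have hp2 : 1 ≤ p * 7 := by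
    rw [hp, ← div_eq_inv_mul, le_div_iff₀ (by positivity)]; linarith [Real.pi_lt_d2]
  have hasy : ∀ u ∈ G.verts, R / 2 ≤ dist u u₀ →
      |Gfree u - p * Real.log (dist u u₀)| ≤ 4 * (C * t ^ 2) := by
    intro u hu hd
    have hd0 : 0 < dist u u₀ := by linarith
    refine (hasymp u hu (dist_pos.1 hd0)).trans ?_
    rw [div_le_iff₀ (by positivity), ← htR]
    have : (R / 2) ^ 2 ≤ dist u u₀ ^ 2 := pow_le_pow_left₀ (by positivity) hd 2
    have h2 : 0 ≤ C * t ^ 2 := by positivity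
    nlinarith
  have hasyB : ∀ u ∈ Bd,
      |Gfree u - p * Real.log (dist u u₀)| ≤ C * t ^ 2 := by
    intro u hu
    have hd := hBd1 u hu
    have hd0 : 0 < dist u u₀ := by linarith
    refine (hasymp u (hBv u hu) (dist_pos.1 hd0)).trans ?_
    rw [div_le_iff₀ (by positivity), ← htR]
    have : R ^ 2 ≤ dist u u₀ ^ 2 := pow_le_pow_left₀ (by positivity) hd 2
    have h2 : 0 ≤ C * t ^ 2 := by positivity
    nlinarith
  -- the harmonic part
  set H : ℂ → ℝ := fun u => ∑ a ∈ Bd, ω u a * Gfree a with hH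
  have hHharm : ∀ u ∈ IntF,
      ∑ v ∈ G.nbrs u, Real.tan (G.halfAngle u v) * (H v - H u) = 0 := by
    intro u hu
    have e : ∀ v ∈ G.nbrs u, Real.tan (G.halfAngle u v) * (H v - H u)
        = ∑ a ∈ Bd, Gfree a * (Real.tan (G.halfAngle u v) * (ω v a - ω u a)) := by
      intro v _
      simp only [hH]
      rw [← Finset.sum_sub_distrib, Finset.mul_sum]
      exact Finset.sum_congr rfl fun a _ => by ring
    rw [Finset.sum_congr rfl e, Finset.sum_comm]
    refine Finset.sum_eq_zero fun a ha => ?_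
    rw [← Finset.mul_sum]
    have : ∑ v ∈ G.nbrs u, Real.tan (G.halfAngle u v) * (ω v a - ω u a) = 0 :=
      (hω a ha).1 u hu
    rw [this, mul_zero]
  have hHB : ∀ b ∈ Bd, H b = Gfree b := by
    intro b hb
    simp only [hH]
    rw [Finset.sum_eq_single_of_mem b hb, (hω b hb).2.1, one_mul]
    intro a ha hne
    rw [(hω a ha).2.2 b hb hne.symm, zero_mul]
  have hHlow : ∀ u ∈ IntF, p * Real.log R - C * t ^ 2 ≤ H u := by
    refine IsoAux.min_principle hδ hη₀ hη₁ G IntF Bd hIv hN2 H _ (fun u hu => (hHharm u hu).le) ?_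
    intro b hb
    rw [hHB b hb]
    have h1 := (abs_le.1 (hasyB b hb)).1
    have h2 := mul_le_mul_of_nonneg_left (Real.log_le_log hR0 (hBd1 b hb)) hp0.le
    linarith
  have hHup : ∀ u ∈ IntF, H u ≤ p * (Real.log R + 2 * t) + C * t ^ 2 := by
    have := IsoAux.min_principle hδ hη₀ hη₁ G IntF Bd hIv hN2 (fun u => - H u)
      (-(p * (Real.log R + 2 * t) + C * t ^ 2)) (fun u hu => by
        have e := hHharm u hu
        rw [← neg_eq_zero, ← Finset.sum_neg_distrib] at e
        refine le_of_eq ?_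
        rw [← e]
        exact Finset.sum_congr rfl fun v _ => by ring) (by
        intro b hb
        rw [hHB b hb]
        have h1 := (abs_le.1 (hasyB b hb)).2
        have h2 := mul_le_mul_of_nonneg_left (IsoAux.log_upper hδ hR10 2
          (hR0.trans_le (hBd1 b hb)) (hBd2 b hb)) hp0.le
        linarith)
    intro u hu
    have := this u hu
    linarith
  -- minus the Green's function of the disc
  set g : ℂ → ℝ := fun u => H u - Gfree u with hg
  have hsplit : ∀ u ∈ IntF, ∑ v ∈ G.nbrs u, Real.tan (G.halfAngle u v) * (g v - g u)
      = - ∑ v ∈ G.nbrs u, Real.tan (G.halfAngle u v) * (Gfree v - Gfree u) := by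
    intro u hu
    rw [← zero_sub, ← hHharm u hu, ← Finset.sum_sub_distrib]
    exact Finset.sum_congr rfl fun v _ => by simp only [hg]; ring
  have hgharm : ∀ u ∈ IntF, u ≠ u₀ → G.HarmAt g u := by
    intro u hu hne
    have e := hsplit u hu
    rw [show ∑ v ∈ G.nbrs u, Real.tan (G.halfAngle u v) * (Gfree v - Gfree u) = 0 from
      hharm u (hIv u hu) hne, neg_zero] at e
    exact e
  have hg1 : ∑ v ∈ G.nbrs u₀, Real.tan (G.halfAngle u₀ v) * (g v - g u₀) = -1 := by
    rw [hsplit u₀ hu₀I, hlap]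
  have hgB : ∀ b ∈ Bd, g b = 0 := fun b hb => by simp only [hg]; rw [hHB b hb, sub_self]
  have hgpos : ∀ u ∈ IntF, 0 ≤ g u := by
    refine IsoAux.min_principle hδ hη₀ hη₁ G IntF Bd hIv hN2 g 0 ?_ (fun b hb => (hgB b hb).ge)
    intro u hu
    by_cases h : u = u₀
    · rw [h, hg1]; norm_num
    · exact (hgharm u hu h).le
  have hgup : ∀ u ∈ IntF, R - 5 * δ ≤ dist u u₀ → g u ≤ (2 + 5 * C) * t := by
    intro u hu hd
    have h1 := (abs_le.1 (hasy u (hIv u hu) (by linarith))).1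
    have h2 := hHup u hu
    have h3 := mul_le_mul_of_nonneg_left (IsoAux.log_lower hδ hR10 hd) hp0.le
    have h4 : C * t ^ 2 ≤ C * t := by nlinarith [mul_pos hC ht0]
    have h5 : p * 6 * t ≤ 1 * t := mul_le_mul_of_nonneg_right hp1 ht0.le
    simp only [hg]
    have e2 : 0 ≤ C * t ^ 2 := by positivity
    rw [← htd] at h3
    clear_value t p
    ring_nf at h1 h2 h3 h4 h5 e2 ⊢
    linarith
  have hglow : ∀ u ∈ IntF, R - 5 * δ ≤ dist u u₀ → dist u u₀ ≤ R - 3 * δ → 1 / 4 * t ≤ g u := by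
    intro u hu hd hd2
    have h1 := (abs_le.1 (hasy u (hIv u hu) (by linarith))).2
    have h2 := hHlow u hu
    have h3 := mul_le_mul_of_nonneg_left (IsoAux.log_upper hδ hR10 (-3)
      (show 0 < dist u u₀ by linarith) (by linarith)) hp0.le
    have h4 : 40 * (C * t) * t ≤ 1 * t := mul_le_mul_of_nonneg_right htC ht0.le
    have h5 : 1 * t ≤ p * 7 * t := mul_le_mul_of_nonneg_right hp2 ht0.le
    simp only [hg]
    have e2 : 0 ≤ C * t ^ 2 := by positivity
    rw [← htd] at h3
    clear_value t p
    ring_nf at h1 h2 h3 h4 h5 e2 ⊢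
    linarith
  -- Harnack chain
  have hchain : ∀ n : ℕ, ∀ u ∈ IntF, R - 5 * δ ≤ dist u u₀ →
      dist u u₀ ≤ R - 3 * δ + n * (s / 4) * δ → q ^ n * (1 / 4 * t) ≤ g u := by
    intro n
    induction n with
    | zero =>
      intro u hu h1 h2
      rw [pow_zero, one_mul]
      exact hglow u hu h1 (by simpa using h2)
    | succ n ih =>
      intro u hu h1 h2
      by_cases h3 : dist u u₀ ≤ R - 3 * δ
      · refine le_trans ?_ (hglow u hu h1 h3)
        have : q ^ (n + 1) ≤ 1 := pow_le_one₀ hq0.le hq1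
        nlinarith
      · push Not at h3
        have hr2 : R / 2 ≤ dist u u₀ := by linarith
        obtain ⟨v, hv, hv1, hv2⟩ := IsoAux.inward hδ hη₀ hη₁ G (hIv u hu) (u₀ := u₀) (by
          rw [← hs]; nlinarith)
        rw [← hs] at hv1
        have hvI : v ∈ IntF := (hInt v).2 ⟨G.nbrs_sub u (hIv u hu) v hv, mem_ball.2 (by
          have : 0 < s / 4 * δ := by positivity
          linarith [hId u hu])⟩
        push_cast at h2
        have h4 := ih v hvI (by linarith) (by nlinarith)
        have h5 := IsoAux.harnack_step hη₀ hη₁ G D hD1 (hIv u hu) hv (hD δ hδ G u (hIv u hu)) g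
          (hgpos u hu) (fun w hw => by
            rcases hN2 u hu w hw with h | h
            · exact hgpos w h
            · exact (hgB w h).ge) (hgharm u hu (dist_pos.1 (by linarith)))
        rw [← hq] at h5
        calc q ^ (n + 1) * (1 / 4 * t) = q * (q ^ n * (1 / 4 * t)) := by ring
          _ ≤ q * g v := mul_le_mul_of_nonneg_left h4 hq0.le
          _ ≤ g u := h5
  have hDt : 1 ≤ D * (Real.tan η)⁻¹ := by
    have : 1 ≤ (Real.tan η)⁻¹ := (one_le_inv₀ ht).2 ht1
    nlinarith
  refine ⟨?_, ?_⟩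
  · intro u hu h1 h2
    have e : |Gfree u - ∑ a ∈ Bd, ω u a * Gfree a| = g u := by
      rw [show Gfree u - ∑ a ∈ Bd, ω u a * Gfree a = - g u by simp only [hg, hH]; ring, abs_neg,
        abs_of_nonneg (hgpos u hu)]
    rw [e, mul_div_assoc, mul_div_assoc, ← htd]
    have l1 := hglow u hu h1 h2
    have l2 := hgup u hu h1
    constructor
    · refine le_trans (mul_le_mul_of_nonneg_right ?_ ht0.le) l1
      nlinarith
    · refine l2.trans (mul_le_mul_of_nonneg_right ?_ ht0.le)
      nlinarith
  · intro a ha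
    rw [mul_div_assoc, mul_div_assoc, ← htd]
    have e := IsoAux.green G IntF Bd hIB hN2 u₀ a hu₀I ha g (fun w => ω w a) hgB hgharm hg1
      (hω a ha).1 (hω a ha).2.1 (hω a ha).2.2
    rw [e]
    have hnear : ∀ v ∈ IntF, a ∈ G.nbrs v → R - 5 * δ ≤ dist v u₀ := by
      intro v hv hva
      have := dist_triangle a v u₀
      linarith [hadj v hv a hva, hBd1 a ha]
    constructor
    · obtain ⟨-, v, hv, hva⟩ := (hBd a).1 ha
      have l := hchain N v hv (hnear v hv hva) (by nlinarith [hId v hv])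
      have b := (IsoAux.cond_bounds hη₀ hη₁ G (hIv v hv) hva).1
      have h1 : Real.tan (G.halfAngle v a) * g v ≤
          ∑ u ∈ IntF with a ∈ G.nbrs u, Real.tan (G.halfAngle u a) * g u :=
        Finset.single_le_sum (f := fun u => Real.tan (G.halfAngle u a) * g u)
          (fun u hu => by
            rw [Finset.mem_filter] at hu
            exact mul_nonneg (ht.le.trans (IsoAux.cond_bounds hη₀ hη₁ G (hIv u hu.1) hu.2).1)
              (hgpos u hu.1)) (Finset.mem_filter.2 ⟨hv, hva⟩)
      refine le_trans ?_ h1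
      calc Real.tan η * (q ^ N / 4) * t = Real.tan η * (q ^ N * (1 / 4 * t)) := by ring
        _ ≤ Real.tan η * g v := mul_le_mul_of_nonneg_left l ht.le
        _ ≤ _ := mul_le_mul_of_nonneg_right b (hgpos v hv)
    · have h1 : ∑ u ∈ IntF with a ∈ G.nbrs u, Real.tan (G.halfAngle u a) * g u ≤
          (IntF.filter (fun u => a ∈ G.nbrs u)).card • ((Real.tan η)⁻¹ * ((2 + 5 * C) * t)) := by
        refine Finset.sum_le_card_nsmul _ _ _ fun u hu => ?_
        rw [Finset.mem_filter] at hu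
        exact mul_le_mul (IsoAux.cond_bounds hη₀ hη₁ G (hIv u hu.1) hu.2).2
          (hgup u hu.1 (hnear u hu.1 hu.2)) (hgpos u hu.1) (by positivity)
      have h2 : (IntF.filter (fun u => a ∈ G.nbrs u)).card ≤ D := by
        refine le_trans (Finset.card_le_card fun u hu => ?_) (hD δ hδ G a (hBv a ha))
        rw [Finset.mem_filter] at hu
        exact (G.nbrs_symm u a).1 hu.2
      refine h1.trans ?_
      rw [nsmul_eq_mul]
      calc _ ≤ (D:ℝ) * ((Real.tan η)⁻¹ * ((2 + 5 * C) * t)) := by gcongr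
        _ = _ := by ring
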